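/- arXiv:1510.05274 — 3 statements merged into one kernel-verified Lean document; each statement's English description precedes it below -/
import Mathlib

section
/- Let α₀ > 0, β₀ > 0 and λ > 0, and let (φ,ψ) ∈ H¹(ℝ)×H¹(ℝ) satisfy ∫_ℝ φ² ψ dx = λ and I(φ,ψ) = M_λ. Then (the continuous representatives of) φ and ψ are infinitely differentiable on ℝ, and every derivative φ^{(k)}, ψ^{(k)} (k ≥ 0) is square-integrable on ℝ (i.e. φ, ψ ∈ H^∞(ℝ)). -/
/-!
The constraint `∫ f² g` is homogeneous of degree three and `I` of degree two, so rescaling an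
arbitrary pair with `m = ∫ f² g > 0` onto the constraint set gives
`M_lam * (m / lam) ^ (2/3) ≤ I(f, g)` (`Mfun_mul_rpow_le`), with equality at a minimizer.
Along `(φ + ε h, ψ + ε k)` both sides are explicit in `ε`, and comparing derivatives at `ε = 0`
(`first_variation`) yields the weak Euler–Lagrange system, tested against every
`(h, k) ∈ H¹ × H¹` (`euler_lagrange`):
`φ'' = α₀ φ - 2 c φ ψ` and `ψ'' = β₀ ψ - c φ²`, where `c = M_lam / (3 lam)`.

The right-hand sides are continuous. By the du Bois-Reymond lemma
(`ae_const_of_integral_mul_deriv_eq_zero`) `φ'` and `ψ'` agree almost everywhere with `C¹`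
functions; since `φ` and `ψ` are the integrals of their derivatives, they are `C²` and the equations
hold pointwise (`hasDerivAt_deriv_of_weak`). Smoothness follows by bootstrapping. For square
integrability of the derivatives, functions in `H¹(ℝ)` are bounded, so the Leibniz rule controls the
`k`-th derivative of a product in `L²` by the derivatives of order at most `k + 1` of the factors
(`memLp_iteratedDeriv_mul`), while the equations express derivatives of order `k + 2` through
`k`-th derivatives of `φ`, `ψ` and of their products.
-/

open MeasureTheory Filter Topology

noncomputable section

/-- Membership in `H¹(ℝ)`: `f` is differentiable with `f` and `f'` square-integrable. -/
def InH1 (f : ℝ → ℝ) : Prop :=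
  Differentiable ℝ f ∧ Integrable (fun x => f x ^ 2) ∧ Integrable (fun x => deriv f x ^ 2)

/-- The functional `I(f,g) = ∫ (f'² + g'² + α₀ f² + β₀ g²)`. -/
def Ifun (α₀ β₀ : ℝ) (f g : ℝ → ℝ) : ℝ :=
  ∫ x : ℝ, (deriv f x ^ 2 + deriv g x ^ 2 + α₀ * f x ^ 2 + β₀ * g x ^ 2)

/-- The set of values `I(f,g)` over pairs in `H¹ × H¹` with `∫ f² g = lam`. -/
def IvalSet (α₀ β₀ lam : ℝ) : Set ℝ :=
  {m | ∃ f g : ℝ → ℝ, InH1 f ∧ InH1 g ∧ (∫ x : ℝ, f x ^ 2 * g x) = lam ∧ Ifun α₀ β₀ f g = m}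

/-- `M_lam`, the infimum of `I` subject to the constraint `∫ f² g = lam`. -/
def Mfun (α₀ β₀ lam : ℝ) : ℝ := sInf (IvalSet α₀ β₀ lam)

open scoped ContDiff

/-! ### Regularity of weak solutions -/

/-- The du Bois-Reymond lemma. Given a test function `η`, subtracting `(∫ η) χ` for a fixed bump `χ`
of integral one leaves the derivative of a test function, so `w - ∫ χ w` is orthogonal to `η`. -/
theorem ae_const_of_integral_mul_deriv_eq_zero {w : ℝ → ℝ} (hw : LocallyIntegrable w)
    (h : ∀ g : ℝ → ℝ, ContDiff ℝ ∞ g → HasCompactSupport g → ∫ x, w x * deriv g x = 0) :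
    ∃ c : ℝ, ∀ᵐ x, w x = c := by
  let b : ContDiffBump (0 : ℝ) := default
  let χ : ℝ → ℝ := b.normed volume
  have hχ : ContDiff ℝ ∞ χ := b.contDiff_normed
  have hχs : HasCompactSupport χ := b.hasCompactSupport_normed
  have hχ1 : ∫ x, χ x = 1 := b.integral_normed
  have hint : ∀ η : ℝ → ℝ, ContDiff ℝ ∞ η → HasCompactSupport η →
      Integrable (fun x => η x * w x) := fun η hη hηs => by
    simpa using hw.integrable_smul_left_of_hasCompactSupport hη.continuous hηs
  set c := ∫ x, χ x * w x with hc
  refine ⟨c, ?_⟩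
  have key : ∀ᵐ x, w x - c = 0 := by
    apply ae_eq_zero_of_integral_contDiff_smul_eq_zero (μ := volume)
    · exact hw.sub (locallyIntegrable_const c)
    intro η hη hηs
    have hηi : Integrable η := hη.continuous.integrable_of_hasCompactSupport hηs
    have hχi : Integrable χ := hχ.continuous.integrable_of_hasCompactSupport hχs
    set m := ∫ x, η x with hm
    -- `θ` has mean zero, so its primitive is again a test function
    let θ : ℝ → ℝ := fun x => η x - m * χ x
    have hθ : ContDiff ℝ ∞ θ := hη.sub (contDiff_const.mul hχ)
    have hθs : HasCompactSupport θ := hηs.sub hχs.mul_left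
    have hθ0 : ∫ x, θ x = 0 := by
      rw [integral_sub hηi (hχi.const_mul m), integral_const_mul, hχ1]; simp [hm]
    obtain ⟨R, hR⟩ := hθs.isCompact.isBounded.subset_closedBall (0 : ℝ)
    have hz : ∀ x, R < |x| → θ x = 0 := fun x hx => by
      by_contra hne
      have := hR (subset_tsupport θ hne)
      simp [Metric.mem_closedBall] at this
      linarith
    let g : ℝ → ℝ := fun x => ∫ t in (-(|R| + 1))..x, θ t
    have hgd : ∀ x, HasDerivAt g (θ x) x := fun x =>
      intervalIntegral.integral_hasDerivAt_right (hθ.continuous.intervalIntegrable _ _)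
        (hθ.continuous.stronglyMeasurableAtFilter _ _) hθ.continuous.continuousAt
    have hgd' : deriv g = θ := funext fun x => (hgd x).deriv
    have hg : ContDiff ℝ ∞ g := by
      rw [contDiff_infty_iff_deriv]
      exact ⟨fun x => (hgd x).differentiableAt, hgd' ▸ hθ⟩
    have hgs : HasCompactSupport g := by
      apply HasCompactSupport.intro (isCompact_Icc (a := -(|R| + 1)) (b := |R| + 1))
      intro x hx
      have hRR := le_abs_self R
      rcases lt_or_ge x (-(|R| + 1)) with hx1 | hx1
      · apply intervalIntegral.integral_zero_ae
        refine Eventually.of_forall fun t ht => hz t ?_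
        rw [Set.uIoc_of_ge hx1.le] at ht
        have := ht.2
        have := neg_le_abs t
        linarith
      · have hx2 : |R| + 1 < x := by
          by_contra hcon
          exact hx ⟨hx1, not_lt.1 hcon⟩
        change ∫ t in (-(|R| + 1))..x, θ t = 0
        rw [intervalIntegral.integral_eq_integral_of_support_subset, hθ0]
        intro t ht
        have : |t| ≤ R := by
          by_contra hcon
          exact ht (hz t (not_le.1 hcon))
        have := abs_le.1 this
        constructor <;> linarith
    have h0 := h g hg hgs
    rw [hgd'] at h0
    have e1 : ∫ x, w x * θ x = (∫ x, η x * w x) - m * c := by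
      rw [hc, ← integral_const_mul, ← integral_sub (hint η hη hηs) ((hint χ hχ hχs).const_mul m)]
      congr 1; ext x; simp only [θ]; ring
    have e2 : ∫ x, η x • (w x - c) = (∫ x, η x * w x) - m * c := by
      rw [hm, ← integral_mul_const, ← integral_sub (hint η hη hηs) (hηi.mul_const c)]
      congr 1; ext x; simp only [smul_eq_mul]; ring
    rw [e2, ← e1, h0]
  filter_upwards [key] with x hx using sub_eq_zero.1 hx

/-- A weak solution of `u'' = q` with continuous `q` is a classical one. Differentiability of `u` at
every point is used to recover the derivative everywhere, not just almost everywhere. -/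
theorem hasDerivAt_deriv_of_weak {u q : ℝ → ℝ} (hu : Differentiable ℝ u)
    (hu' : MemLp (deriv u) 2) (hq : Continuous q)
    (h : ∀ g : ℝ → ℝ, ContDiff ℝ ∞ g → HasCompactSupport g →
      ∫ x, (deriv u x * deriv g x + q x * g x) = 0) (x : ℝ) :
    HasDerivAt (deriv u) (q x) x := by
  have hul : LocallyIntegrable (deriv u) := hu'.locallyIntegrable (by norm_num)
  let G : ℝ → ℝ := fun x => ∫ t in (0:ℝ)..x, q t
  have hG : ∀ x, HasDerivAt G (q x) x := fun x =>
    intervalIntegral.integral_hasDerivAt_right (hq.intervalIntegrable _ _)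
      (hq.stronglyMeasurableAtFilter _ _) hq.continuousAt
  have hGc : Continuous G := continuous_iff_continuousAt.2 fun x => (hG x).continuousAt
  obtain ⟨c, hc⟩ : ∃ c : ℝ, ∀ᵐ x, deriv u x - G x = c := by
    apply ae_const_of_integral_mul_deriv_eq_zero (w := fun x => deriv u x - G x)
      (hul.sub hGc.locallyIntegrable)
    intro g hg hgs
    have hdg : Continuous (deriv g) := hg.continuous_deriv (by simp)
    have i1 : Integrable (fun x => deriv u x * deriv g x) := by
      have := hul.integrable_smul_left_of_hasCompactSupport hdg hgs.deriv
      simpa [mul_comm] using this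
    have i2 : Integrable (fun x => q x * g x) :=
      (hq.mul hg.continuous).integrable_of_hasCompactSupport hgs.mul_left
    have i3 : Integrable (fun x => G x * deriv g x) :=
      (hGc.mul hdg).integrable_of_hasCompactSupport hgs.deriv.mul_left
    have i4 : Integrable (fun x => G x * g x) :=
      (hGc.mul hg.continuous).integrable_of_hasCompactSupport hgs.mul_left
    have hp := integral_mul_deriv_eq_deriv_mul_of_integrable (u := G) (v := g)
      (u' := q) (v' := deriv g) (fun x _ => hG x)
      (fun x _ => ((hg.differentiable (by simp)) x).hasDerivAt) i3 i2 i4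
    have h0 := h g hg hgs
    rw [integral_add i1 i2] at h0
    simp only [sub_mul]
    rw [integral_sub i1 i3, hp]
    linarith
  have hcont : Continuous fun x => G x + c := hGc.add continuous_const
  -- `u` is an integral of its derivative, hence of the continuous function `G + c`
  have hux : u = fun x => u 0 + ∫ t in (0:ℝ)..x, (G t + c) := by
    ext y
    have := intervalIntegral.integral_eq_sub_of_hasDerivAt (a := 0) (b := y)
      (fun x _ => (hu x).hasDerivAt)
      (hul.integrableOn_isCompact isCompact_uIcc).intervalIntegrable
    have e : ∫ t in (0:ℝ)..y, deriv u t = ∫ t in (0:ℝ)..y, (G t + c) := by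
      apply intervalIntegral.integral_congr_ae
      filter_upwards [hc] with t ht _
      linarith
    linarith
  have hdu : deriv u = fun x => G x + c := by
    ext y
    have : HasDerivAt u (G y + c) y := by
      rw [hux]
      exact (intervalIntegral.integral_hasDerivAt_right (hcont.intervalIntegrable _ _)
        (hcont.stronglyMeasurableAtFilter _ _) hcont.continuousAt).const_add _
    exact this.deriv
  rw [hdu]
  exact (hG x).add_const c

/-! ### The space `H¹(ℝ)` -/

theorem InH1.memLp {f : ℝ → ℝ} (hf : InH1 f) : MemLp f 2 :=
  (memLp_two_iff_integrable_sq hf.1.continuous.aestronglyMeasurable).2 hf.2.1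

theorem InH1.memLp_deriv {f : ℝ → ℝ} (hf : InH1 f) : MemLp (deriv f) 2 :=
  (memLp_two_iff_integrable_sq (aestronglyMeasurable_deriv f volume)).2 hf.2.2

theorem InH1.of_memLp {f : ℝ → ℝ} (hd : Differentiable ℝ f) (hf : MemLp f 2)
    (hf' : MemLp (deriv f) 2) : InH1 f :=
  ⟨hd, hf.integrable_sq, hf'.integrable_sq⟩

/-- Functions in `H¹(ℝ)` are bounded, because `f²` has the integrable derivative `2 f f'`. -/
theorem InH1.bounded {f : ℝ → ℝ} (hf : InH1 f) : ∃ C, ∀ x, |f x| ≤ C := by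
  have hi : Integrable (fun x => 2 * (f x * deriv f x)) :=
    (hf.memLp.integrable_mul hf.memLp_deriv).const_mul 2
  have hd : ∀ x, HasDerivAt (fun y => f y ^ 2) (2 * (f x * deriv f x)) x := fun x => by
    exact ((hf.1 x).hasDerivAt.fun_pow 2).congr_deriv (by push_cast; ring)
  refine ⟨√(f 0 ^ 2 + ∫ x, ‖2 * (f x * deriv f x)‖), fun x => ?_⟩
  apply Real.abs_le_sqrt
  have h1 := intervalIntegral.integral_eq_sub_of_hasDerivAt (a := 0) (b := x)
    (fun y _ => hd y) hi.intervalIntegrable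
  have h2 : ‖∫ t in (0:ℝ)..x, 2 * (f t * deriv f t)‖ ≤ ∫ x, ‖2 * (f x * deriv f x)‖ :=
    intervalIntegral.norm_integral_le_integral_norm_uIoc.trans
      (setIntegral_le_integral hi.norm (Eventually.of_forall fun _ => norm_nonneg _))
  have h3 := le_abs_self (∫ t in (0:ℝ)..x, 2 * (f t * deriv f t))
  rw [← Real.norm_eq_abs] at h3
  linarith

theorem InH1.memLp_top {f : ℝ → ℝ} (hf : InH1 f) : MemLp f ⊤ := by
  obtain ⟨C, hC⟩ := hf.bounded
  exact memLp_top_of_bound hf.1.continuous.aestronglyMeasurable C (Eventually.of_forall hC)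

theorem InH1.memLp_mul {f g : ℝ → ℝ} (hf : InH1 f) (hg : InH1 g) :
    MemLp (fun x => f x * g x) 2 :=
  MemLp.mul' hg.memLp hf.memLp_top

theorem InH1.integrable_mul_mul {f g h : ℝ → ℝ} (hf : InH1 f) (hg : InH1 g) (hh : InH1 h) :
    Integrable (fun x => f x * g x * h x) :=
  (hf.memLp_mul hg).integrable_mul hh.memLp

theorem InH1.const_mul {f : ℝ → ℝ} (hf : InH1 f) (t : ℝ) : InH1 (fun x => t * f x) := by
  refine .of_memLp (hf.1.const_mul t) (hf.memLp.const_mul t) ?_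
  convert hf.memLp_deriv.const_mul t using 1
  ext x; simp

theorem InH1.add {f g : ℝ → ℝ} (hf : InH1 f) (hg : InH1 g) : InH1 (fun x => f x + g x) := by
  refine .of_memLp (hf.1.add hg.1) (hf.memLp.add hg.memLp) ?_
  convert hf.memLp_deriv.add hg.memLp_deriv using 1
  ext x; exact deriv_add (hf.1 x) (hg.1 x)

theorem inH1_zero : InH1 (fun _ => 0) := by
  refine ⟨differentiable_const 0, ?_, ?_⟩ <;> simp

theorem InH1.of_test {g : ℝ → ℝ} (hg : ContDiff ℝ ∞ g) (hs : HasCompactSupport g) : InH1 g :=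
  .of_memLp (hg.differentiable (by simp)) (hg.continuous.memLp_of_hasCompactSupport hs)
    ((hg.continuous_deriv (by simp)).memLp_of_hasCompactSupport hs.deriv)

/-! ### The Euler–Lagrange system -/

/-- Lower bound for `I` off the constraint set: `(t f, t g)` with `t = (lam / m) ^ (1/3)` is
admissible and has `I`-value `t² I(f, g)`. -/
theorem Mfun_mul_rpow_le {α₀ β₀ lam : ℝ} (hα : 0 < α₀) (hβ : 0 < β₀) (hlam : 0 < lam)
    {f g : ℝ → ℝ} (hf : InH1 f) (hg : InH1 g) (hm : 0 < ∫ x, f x ^ 2 * g x) :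
    Mfun α₀ β₀ lam * ((∫ x, f x ^ 2 * g x) / lam) ^ (2 / 3 : ℝ) ≤ Ifun α₀ β₀ f g := by
  set m := ∫ x, f x ^ 2 * g x with hmdef
  set t : ℝ := (lam / m) ^ (1 / 3 : ℝ) with ht
  have hr : 0 < lam / m := by positivity
  have ht3 : t ^ 3 = lam / m := by
    rw [ht, ← Real.rpow_natCast, ← Real.rpow_mul hr.le]; norm_num
  have ht2 : t ^ 2 = (lam / m) ^ (2 / 3 : ℝ) := by
    rw [ht, ← Real.rpow_natCast, ← Real.rpow_mul hr.le]; norm_num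
  have hI : Ifun α₀ β₀ (fun x => t * f x) (fun x => t * g x) = t ^ 2 * Ifun α₀ β₀ f g := by
    unfold Ifun
    rw [← integral_const_mul]
    congr 1; ext x
    simp only [deriv_const_mul_field']
    ring
  have hle : Mfun α₀ β₀ lam ≤ t ^ 2 * Ifun α₀ β₀ f g := by
    apply csInf_le
    · refine ⟨0, ?_⟩
      rintro _ ⟨a, b, _, _, _, rfl⟩
      exact integral_nonneg fun x => by positivity
    · refine ⟨_, _, hf.const_mul t, hg.const_mul t, ?_, hI⟩
      have : (fun x => (t * f x) ^ 2 * (t * g x)) = fun x => t ^ 3 * (f x ^ 2 * g x) := by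
        ext x; ring
      rw [this, integral_const_mul, ht3, ← hmdef]
      field_simp
  have hp : 0 < (m / lam) ^ (2 / 3 : ℝ) := by positivity
  have h1 : (lam / m) ^ (2 / 3 : ℝ) * (m / lam) ^ (2 / 3 : ℝ) = 1 := by
    rw [← Real.mul_rpow hr.le (by positivity)]
    have : lam / m * (m / lam) = 1 := by field_simp
    rw [this, Real.one_rpow]
  calc _ ≤ (t ^ 2 * Ifun α₀ β₀ f g) * (m / lam) ^ (2 / 3 : ℝ) := by gcongr
    _ = Ifun α₀ β₀ f g * ((lam / m) ^ (2 / 3 : ℝ) * (m / lam) ^ (2 / 3 : ℝ)) := by rw [ht2]; ring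
    _ = _ := by rw [h1, mul_one]

/-- The scaling inequality along a line through a minimizer, with `I` quadratic and the constraint
cubic in `ε`, forces the linear coefficients to match. At `ε = 0` both sides equal `M`. -/
theorem first_variation {lam M A B C D E : ℝ} (hlam : 0 < lam)
    (h : ∀ ε : ℝ, 0 < lam + ε * C + ε ^ 2 * D + ε ^ 3 * E →
      M * ((lam + ε * C + ε ^ 2 * D + ε ^ 3 * E) / lam) ^ (2 / 3 : ℝ) ≤ M + ε * A + ε ^ 2 * B) :
    A = 2 * M / (3 * lam) * C := by
  let m : ℝ → ℝ := fun ε => lam + ε * C + ε ^ 2 * D + ε ^ 3 * E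
  let F : ℝ → ℝ := fun ε => (M + ε * A + ε ^ 2 * B) - M * (m ε / lam) ^ (2 / 3 : ℝ)
  have hm0 : m 0 / lam = 1 := by simp [m, hlam.ne']
  have hmd : HasDerivAt m C 0 := by
    have := ((((hasDerivAt_id (0:ℝ)).mul_const C).const_add lam).add
      (((hasDerivAt_id (0:ℝ)).pow 2).mul_const D)).add (((hasDerivAt_id (0:ℝ)).pow 3).mul_const E)
    exact this.congr_deriv (by simp)
  have hId : HasDerivAt (fun ε : ℝ => M + ε * A + ε ^ 2 * B) A 0 := by
    have := (((hasDerivAt_id (0:ℝ)).mul_const A).const_add M).add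
      (((hasDerivAt_id (0:ℝ)).pow 2).mul_const B)
    exact this.congr_deriv (by simp)
  have hF : HasDerivAt F (A - M * (C / lam * (2 / 3 : ℝ) * (m 0 / lam) ^ ((2 / 3 : ℝ) - 1))) 0 :=
    hId.sub (((hmd.div_const lam).rpow_const (Or.inl (by rw [hm0]; exact one_ne_zero))).const_mul M)
  have hmin : IsLocalMin F 0 := by
    have : ∀ᶠ ε in 𝓝 (0:ℝ), 0 < m ε :=
      hmd.continuousAt.eventually_const_lt (by simpa [m] using hlam)
    filter_upwards [this] with ε hε
    have h0 : F 0 = 0 := by simp only [F, hm0, Real.one_rpow]; ring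
    rw [h0]
    exact sub_nonneg.2 (h ε hε)
  have := hmin.hasDerivAt_eq_zero hF
  rw [hm0, Real.one_rpow] at this
  field_simp at this ⊢
  linarith

/-- The weak Euler–Lagrange system for both components at once; the equation for one component is
the case where the other test function is zero. -/
theorem euler_lagrange {α₀ β₀ lam : ℝ} (hα : 0 < α₀) (hβ : 0 < β₀) (hlam : 0 < lam)
    {φ ψ : ℝ → ℝ} (hφ : InH1 φ) (hψ : InH1 ψ) (hconstr : (∫ x : ℝ, φ x ^ 2 * ψ x) = lam)
    (hmin : Ifun α₀ β₀ φ ψ = Mfun α₀ β₀ lam) :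
    ∃ c : ℝ, ∀ h k : ℝ → ℝ, InH1 h → InH1 k →
      ∫ x, (deriv φ x * deriv h x + deriv ψ x * deriv k x + α₀ * (φ x * h x) + β₀ * (ψ x * k x)
        - c * (2 * (φ x * ψ x * h x) + φ x * φ x * k x)) = 0 := by
  refine ⟨Mfun α₀ β₀ lam / (3 * lam), fun h k hh hk => ?_⟩
  have iA : Integrable (fun x => deriv φ x * deriv h x + deriv ψ x * deriv k x
      + α₀ * (φ x * h x) + β₀ * (ψ x * k x)) :=
    (((hφ.memLp_deriv.integrable_mul hh.memLp_deriv).add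
      (hψ.memLp_deriv.integrable_mul hk.memLp_deriv)).add
      ((hφ.memLp.integrable_mul hh.memLp).const_mul α₀)).add
      ((hψ.memLp.integrable_mul hk.memLp).const_mul β₀)
  have iI : ∀ f g : ℝ → ℝ, InH1 f → InH1 g → Integrable (fun x => deriv f x ^ 2 + deriv g x ^ 2
      + α₀ * f x ^ 2 + β₀ * g x ^ 2) := fun f g hf hg =>
    ((hf.2.2.add hg.2.2).add (hf.2.1.const_mul α₀)).add (hg.2.1.const_mul β₀)
  have iM : ∀ f g : ℝ → ℝ, InH1 f → InH1 g → Integrable (fun x => f x ^ 2 * g x) :=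
    fun f g hf hg => by simpa [sq] using hf.integrable_mul_mul hf hg
  have iC : Integrable (fun x => 2 * (φ x * ψ x * h x) + φ x * φ x * k x) :=
    ((hφ.integrable_mul_mul hψ hh).const_mul 2).add (hφ.integrable_mul_mul hφ hk)
  have iD : Integrable (fun x => 2 * (φ x * h x * k x) + h x * h x * ψ x) :=
    ((hφ.integrable_mul_mul hh hk).const_mul 2).add (hh.integrable_mul_mul hh hψ)
  have hI : ∀ ε : ℝ, Ifun α₀ β₀ (fun x => φ x + ε * h x) (fun x => ψ x + ε * k x) =
      Mfun α₀ β₀ lam + ε * (2 * ∫ x, (deriv φ x * deriv h x + deriv ψ x * deriv k x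
      + α₀ * (φ x * h x) + β₀ * (ψ x * k x))) + ε ^ 2 * Ifun α₀ β₀ h k := by
    intro ε
    rw [← hmin]
    unfold Ifun
    rw [← integral_const_mul, ← integral_const_mul, ← integral_const_mul,
      ← integral_add (iI _ _ hφ hψ) ((iA.const_mul 2).const_mul ε),
      ← integral_add ((iI _ _ hφ hψ).fun_add ((iA.const_mul 2).const_mul ε))
        ((iI _ _ hh hk).const_mul _)]
    congr 1; ext x
    have d : ∀ f g : ℝ → ℝ, InH1 f → InH1 g →
        deriv (fun x => f x + ε * g x) x = deriv f x + ε * deriv g x := fun f g hf hg =>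
      ((hf.1 x).hasDerivAt.add ((hg.1 x).hasDerivAt.const_mul ε)).deriv
    rw [d _ _ hφ hh, d _ _ hψ hk]
    ring
  have hM : ∀ ε : ℝ, ∫ x, (φ x + ε * h x) ^ 2 * (ψ x + ε * k x) =
      lam + ε * (∫ x, (2 * (φ x * ψ x * h x) + φ x * φ x * k x))
      + ε ^ 2 * (∫ x, (2 * (φ x * h x * k x) + h x * h x * ψ x))
      + ε ^ 3 * ∫ x, h x ^ 2 * k x := by
    intro ε
    rw [← hconstr, ← integral_const_mul, ← integral_const_mul, ← integral_const_mul,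
      ← integral_add (iM _ _ hφ hψ) (iC.const_mul ε),
      ← integral_add ((iM _ _ hφ hψ).fun_add (iC.const_mul ε)) (iD.const_mul _),
      ← integral_add (((iM _ _ hφ hψ).fun_add (iC.const_mul ε)).fun_add (iD.const_mul _))
        ((iM _ _ hh hk).const_mul _)]
    congr 1; ext x; ring
  have key := first_variation (M := Mfun α₀ β₀ lam) (B := Ifun α₀ β₀ h k)
    (A := 2 * ∫ x, (deriv φ x * deriv h x + deriv ψ x * deriv k x
      + α₀ * (φ x * h x) + β₀ * (ψ x * k x)))
    (C := ∫ x, (2 * (φ x * ψ x * h x) + φ x * φ x * k x))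
    (D := ∫ x, (2 * (φ x * h x * k x) + h x * h x * ψ x)) (E := ∫ x, h x ^ 2 * k x) hlam
    (fun ε hε => by
      rw [← hM ε] at hε
      have := Mfun_mul_rpow_le hα hβ hlam (hφ.add (hh.const_mul ε)) (hψ.add (hk.const_mul ε)) hε
      rwa [hM ε, hI ε] at this)
  rw [integral_sub iA (iC.const_mul _), integral_const_mul]
  field_simp at key ⊢
  linarith

/-! ### Bootstrapping and square-integrable derivatives -/

theorem contDiff_add_two {n : ℕ} {u q : ℝ → ℝ} (hu : Differentiable ℝ u)
    (hu' : ∀ x, HasDerivAt (deriv u) (q x) x) (hq : ContDiff ℝ n q) :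
    ContDiff ℝ (n + 2 : ℕ) u := by
  have h1 : ContDiff ℝ (n + 1 : ℕ) (deriv u) := by
    push_cast
    refine contDiff_succ_iff_deriv.2 ⟨fun x => (hu' x).differentiableAt, by simp, ?_⟩
    rwa [show deriv (deriv u) = q from funext fun x => (hu' x).deriv]
  have := contDiff_succ_iff_deriv.2 ⟨hu, by simp, h1⟩
  exact_mod_cast this

/-- Each Leibniz term is a product of two derivatives of order at most `k`, both in `H¹(ℝ)`, hence
the product of a bounded function and one in `L²`. -/
theorem memLp_iteratedDeriv_mul {f g : ℝ → ℝ} {k : ℕ} (hf : ContDiff ℝ ∞ f)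
    (hg : ContDiff ℝ ∞ g) (hf2 : ∀ j ≤ k + 1, MemLp (iteratedDeriv j f) 2)
    (hg2 : ∀ j ≤ k + 1, MemLp (iteratedDeriv j g) 2) :
    MemLp (iteratedDeriv k (fun x => f x * g x)) 2 := by
  have hH1 : ∀ u : ℝ → ℝ, ContDiff ℝ ∞ u → (∀ j ≤ k + 1, MemLp (iteratedDeriv j u) 2) →
      ∀ j ≤ k, InH1 (iteratedDeriv j u) := fun u hu hu2 j hj =>
    .of_memLp (hu.differentiable_iteratedDeriv j (by exact_mod_cast WithTop.coe_lt_top _))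
      (hu2 j (by omega)) (by rw [← iteratedDeriv_succ]; exact hu2 _ (by omega))
  have e : iteratedDeriv k (fun x => f x * g x) = fun x => ∑ i ∈ Finset.range (k + 1),
      (k.choose i : ℝ) * (iteratedDeriv i f x * iteratedDeriv (k - i) g x) := by
    ext x
    have hfk : ContDiffAt ℝ k f x := (hf.of_le (by exact_mod_cast le_top)).contDiffAt
    have hgk : ContDiffAt ℝ k g x := (hg.of_le (by exact_mod_cast le_top)).contDiffAt
    rw [iteratedDeriv_fun_mul hfk hgk]
    simp only [mul_assoc]
  rw [e]
  refine memLp_finsetSum _ fun i hi => ?_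
  have hi' : i ≤ k := by have := Finset.mem_range.1 hi; omega
  exact ((hH1 f hf hf2 i hi').memLp_mul (hH1 g hg hg2 (k - i) (by omega))).const_mul _


/-- any minimizer `(φ, ψ)` is smooth and lies in `H^∞(ℝ)`: every
iterated derivative is square-integrable. -/
theorem minimizer_smooth_Hinfty (α₀ β₀ lam : ℝ)
    (hα : 0 < α₀) (hβ : 0 < β₀) (hlam : 0 < lam)
    (φ ψ : ℝ → ℝ) (hφ : InH1 φ) (hψ : InH1 ψ)
    (hconstr : (∫ x : ℝ, φ x ^ 2 * ψ x) = lam)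
    (hmin : Ifun α₀ β₀ φ ψ = Mfun α₀ β₀ lam) :
    ContDiff ℝ (⊤ : ℕ∞) φ ∧ ContDiff ℝ (⊤ : ℕ∞) ψ ∧
      (∀ k : ℕ, Integrable (fun x => iteratedDeriv k φ x ^ 2)) ∧
      (∀ k : ℕ, Integrable (fun x => iteratedDeriv k ψ x ^ 2)) := by
  obtain ⟨c, hc⟩ := euler_lagrange hα hβ hlam hφ hψ hconstr hmin
  -- the two equations come from the test pairs `(g, 0)` and `(0, g)`
  have hφ2 : ∀ x, HasDerivAt (deriv φ) (α₀ * φ x - 2 * c * (φ x * ψ x)) x := by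
    have hφc := hφ.1.continuous
    have hψc := hψ.1.continuous
    refine hasDerivAt_deriv_of_weak hφ.1 hφ.memLp_deriv (by fun_prop) fun g hg hgs => ?_
    rw [← hc g (fun _ => 0) (.of_test hg hgs) inH1_zero]
    congr 1; ext x; simp only [deriv_const]; ring
  have hψ2 : ∀ x, HasDerivAt (deriv ψ) (β₀ * ψ x - c * (φ x * φ x)) x := by
    have hφc := hφ.1.continuous
    have hψc := hψ.1.continuous
    refine hasDerivAt_deriv_of_weak hψ.1 hψ.memLp_deriv (by fun_prop) fun g hg hgs => ?_
    rw [← hc (fun _ => 0) g inH1_zero (.of_test hg hgs)]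
    congr 1; ext x; simp only [deriv_const]; ring
  have hsmooth : ∀ n : ℕ, ContDiff ℝ n φ ∧ ContDiff ℝ n ψ := by
    intro n
    induction n with
    | zero => exact ⟨contDiff_zero.2 hφ.1.continuous, contDiff_zero.2 hψ.1.continuous⟩
    | succ n ih =>
      obtain ⟨h1, h2⟩ := ih
      have hle : ((n + 1 : ℕ) : WithTop ℕ∞) ≤ (n + 2 : ℕ) := by exact_mod_cast Nat.le_succ _
      exact ⟨(contDiff_add_two hφ.1 hφ2 (by fun_prop)).of_le hle,
        (contDiff_add_two hψ.1 hψ2 (by fun_prop)).of_le hle⟩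
  have hφs : ContDiff ℝ ∞ φ := contDiff_infty.2 fun n => (hsmooth n).1
  have hψs : ContDiff ℝ ∞ ψ := contDiff_infty.2 fun n => (hsmooth n).2
  have hL2 : ∀ k : ℕ, ∀ j ≤ k + 1,
      MemLp (iteratedDeriv j φ) 2 ∧ MemLp (iteratedDeriv j ψ) 2 := by
    intro k
    induction k with
    | zero =>
      intro j hj
      interval_cases j
      · simpa using ⟨hφ.memLp, hψ.memLp⟩
      · simpa using ⟨hφ.memLp_deriv, hψ.memLp_deriv⟩
    | succ k ih =>
      intro j hj
      rcases Nat.lt_or_ge j (k + 2) with hj' | hj'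
      · exact ih j (by omega)
      obtain rfl : j = k + 2 := by omega
      have ihφ := fun j hj => (ih j hj).1
      have ihψ := fun j hj => (ih j hj).2
      have hat : ∀ u : ℝ → ℝ, ContDiff ℝ ∞ u → ∀ x, ContDiffAt ℝ k u x := fun u hu x =>
        (hu.of_le (by exact_mod_cast le_top)).contDiffAt
      have eφ : deriv (deriv φ) = fun x => α₀ * φ x - 2 * c * (φ x * ψ x) :=
        funext fun x => (hφ2 x).deriv
      have eψ : deriv (deriv ψ) = fun x => β₀ * ψ x - c * (φ x * φ x) :=
        funext fun x => (hψ2 x).deriv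
      constructor
      · have e : iteratedDeriv (k + 2) φ = fun x =>
            α₀ * iteratedDeriv k φ x - 2 * c * iteratedDeriv k (fun x => φ x * ψ x) x := by
          ext x
          rw [iteratedDeriv_succ', iteratedDeriv_succ', eφ,
            iteratedDeriv_fun_sub (hat _ (by fun_prop) x) (hat _ (by fun_prop) x),
            iteratedDeriv_const_mul_field, iteratedDeriv_const_mul_field]
        rw [e]
        exact ((ihφ k (by omega)).const_mul _).sub
          ((memLp_iteratedDeriv_mul hφs hψs ihφ ihψ).const_mul _)
      · have e : iteratedDeriv (k + 2) ψ = fun x =>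
            β₀ * iteratedDeriv k ψ x - c * iteratedDeriv k (fun x => φ x * φ x) x := by
          ext x
          rw [iteratedDeriv_succ', iteratedDeriv_succ', eψ,
            iteratedDeriv_fun_sub (hat _ (by fun_prop) x) (hat _ (by fun_prop) x),
            iteratedDeriv_const_mul_field, iteratedDeriv_const_mul_field]
        rw [e]
        exact ((ihψ k (by omega)).const_mul _).sub
          ((memLp_iteratedDeriv_mul hφs hφs ihφ ihφ).const_mul _)
  exact ⟨hφs, hψs, fun k => (hL2 k k (by omega)).1.integrable_sq,
    fun k => (hL2 k k (by omega)).2.integrable_sq⟩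
end
end

section
/- Let f, g : ℝ → ℝ be continuously differentiable with f, g and g′ square-integrable and f² g integrable. Then | ∫_ℝ f(x)² g(x) dx | ≤ ‖f‖_{L²}² · ( 2 sup_{y ∈ ℝ} ∫_{y − 1/2}^{y + 1/2} ( g′(x)² + g(x)² ) dx )^{1/2}. -/
/-!
The bound follows from the pointwise estimate `g x ^ 2 ≤ 2 * ∫ (g' ^ 2 + g ^ 2)`, the integral being
over the unit interval ending at `x`, which gives `|g| ≤ √(2 * sup)` everywhere. For the pointwise
estimate, the fundamental theorem of calculus is applied to `t ↦ (t - (x - 1)) * g t ^ 2`, which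
vanishes at `x - 1` and equals `g x ^ 2` at `x`; its derivative
`g ^ 2 + (t - (x - 1)) * (2 * g * g')` is at most `2 * (g' ^ 2 + g ^ 2)` on the interval because the
weight lies in `[0, 1]`. The supremum is finite since `g` and `g'` are square-integrable.
-/

open MeasureTheory intervalIntegral

noncomputable section

/-- Pointwise control of `g` at the right end of a unit interval by its local `H¹` norm there. -/
lemma sq_right_endpoint_le (g : ℝ → ℝ) (hg : ContDiff ℝ 1 g) (y : ℝ) :
    g (y + 1 / 2) ^ 2 ≤ 2 * ∫ x in (y - 1 / 2)..(y + 1 / 2), (deriv g x ^ 2 + g x ^ 2) := by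
  have hc : Continuous g := hg.continuous
  have hc' : Continuous (deriv g) := hg.continuous_deriv le_rfl
  have hd : ∀ t, HasDerivAt (fun t => (t - (y - 1 / 2)) * g t ^ 2)
      (g t ^ 2 + (t - (y - 1 / 2)) * (2 * g t * deriv g t)) t := by
    intro t
    have h1 : HasDerivAt g (deriv g t) t := (hg.differentiable one_ne_zero t).hasDerivAt
    have h2 := ((hasDerivAt_id t).sub_const (y - 1 / 2)).mul (h1.pow 2)
    refine h2.congr_deriv ?_
    simp
  have hcont : Continuous (fun t => g t ^ 2 + (t - (y - 1 / 2)) * (2 * g t * deriv g t)) := by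
    fun_prop
  have hftc := integral_eq_sub_of_hasDerivAt (a := y - 1 / 2) (b := y + 1 / 2)
    (fun t _ => hd t) (hcont.intervalIntegrable _ _)
  have heq : g (y + 1 / 2) ^ 2 = ∫ t in (y - 1 / 2)..(y + 1 / 2),
      (g t ^ 2 + (t - (y - 1 / 2)) * (2 * g t * deriv g t)) := by
    rw [hftc]; ring
  rw [heq, ← intervalIntegral.integral_const_mul]
  refine integral_mono_on (by linarith) (hcont.intervalIntegrable _ _)
    ((by fun_prop : Continuous _).intervalIntegrable _ _) ?_
  intro t ht
  have h0 : 0 ≤ t - (y - 1 / 2) := by linarith [ht.1]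
  have h1 : 0 ≤ 1 - (t - (y - 1 / 2)) := by linarith [ht.2]
  have h2 : 2 * g t * deriv g t ≤ deriv g t ^ 2 + g t ^ 2 := by
    nlinarith [sq_nonneg (g t - deriv g t)]
  have h3 : 0 ≤ deriv g t ^ 2 + g t ^ 2 := by positivity
  nlinarith [mul_le_mul_of_nonneg_left h2 h0, mul_nonneg h1 h3, sq_nonneg (deriv g t)]

/-- `|∫ f² g| ≤ ‖f‖² · (2 sup_y ∫_{y−1/2}^{y+1/2} (g′² + g²))^{1/2}`. -/
theorem integral_f_sq_g_bound (f g : ℝ → ℝ) (hf : ContDiff ℝ 1 f) (hg : ContDiff ℝ 1 g)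
    (hf2 : Integrable (fun x => f x ^ 2)) (hg2 : Integrable (fun x => g x ^ 2))
    (hg'2 : Integrable (fun x => deriv g x ^ 2))
    (hfg : Integrable (fun x => f x ^ 2 * g x)) :
    |∫ x : ℝ, f x ^ 2 * g x| ≤
      (∫ x : ℝ, f x ^ 2) *
        Real.sqrt (2 * ⨆ y : ℝ, ∫ x in (y - 1 / 2)..(y + 1 / 2), (deriv g x ^ 2 + g x ^ 2)) := by
  -- Without this bound the real supremum would take the junk value `0`.
  have hbdd : BddAbove (Set.range fun y : ℝ =>
      ∫ x in (y - 1 / 2)..(y + 1 / 2), (deriv g x ^ 2 + g x ^ 2)) := by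
    refine ⟨∫ x, (deriv g x ^ 2 + g x ^ 2), ?_⟩
    rintro _ ⟨y, rfl⟩
    simp only
    rw [integral_of_le (by linarith)]
    exact setIntegral_le_integral (hg'2.add hg2) (ae_of_all _ fun x => by
      simp only [Pi.zero_apply]; positivity)
  set S := ⨆ y : ℝ, ∫ x in (y - 1 / 2)..(y + 1 / 2), (deriv g x ^ 2 + g x ^ 2) with hS
  have hpt : ∀ x, |g x| ≤ Real.sqrt (2 * S) := by
    intro x
    apply Real.abs_le_sqrt
    have h1 := sq_right_endpoint_le g hg (x - 1 / 2)
    have h2 := le_ciSup hbdd (x - 1 / 2)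
    rw [show g x = g (x - 1 / 2 + 1 / 2) by simp]
    linarith
  rw [← MeasureTheory.integral_mul_const]
  refine MeasureTheory.abs_integral_le_integral_abs.trans
    (MeasureTheory.integral_mono hfg.abs (hf2.mul_const _) fun x => ?_)
  simp only [abs_mul, abs_of_nonneg (sq_nonneg (f x))]
  exact mul_le_mul_of_nonneg_left (hpt x) (sq_nonneg _)
end
end

section
/- Let λ > 0 and let {(f_n, g_n)} be a sequence of continuously differentiable pairs with f_n, f_n′, g_n, g_n′ square-integrable, sup_n ( ‖f_n‖_{L²}² + ‖f_n′‖_{L²}² + ‖g_n‖_{L²}² + ‖g_n′‖_{L²}² ) < ∞, and lim_{n→∞} ∫_ℝ f_n² g_n dx = λ. Setting ρ_n(x) = f_n′(x)² + g_n′(x)² + f_n(x)² + g_n(x)², there exists γ₀ > 0 such that liminf_{n→∞} sup_{y ∈ ℝ} ∫_{y−1/2}^{y+1/2} ρ_n(x) dx ≥ γ₀; in particular the concentration functions of ρ_n at width 1/2 do not vanish in the limit. -/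
/-!
The one-dimensional Sobolev inequality on an interval of length one gives the pointwise bound
`g(x)² ≤ 2 ∫_{x-1/2}^{x+1/2} (g² + g'²)` (`sq_le_two_mul_integral`), so `|g_n| ≤ √(2 γ_n)` on the
whole line, where `γ_n` is the concentration function of `ρ_n` at width `1/2`. Therefore
`∫ f_n² g_n ≤ √(2 γ_n) ∫ f_n² ≤ √(2 γ_n) B`. As the left side eventually exceeds `λ / 2`, `γ_n` is
eventually at least `(λ / (2 B))² / 2`.
-/

open MeasureTheory intervalIntegral Filter Topology

noncomputable section

/-- Sobolev inequality on the unit interval centred at `x`: the difference `g(x)² - g(t)²` is the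
integral of `2 g g' ≤ g² + g'²` from `t` to `x`; averaging over `t` gives the bound. -/
lemma sq_le_two_mul_integral (g : ℝ → ℝ) (hg : ContDiff ℝ 1 g) (x : ℝ) :
    g x ^ 2 ≤ 2 * ∫ t in (x - 1 / 2)..(x + 1 / 2), (deriv g t ^ 2 + g t ^ 2) := by
  have hgc : Continuous g := hg.continuous
  have hgd : Continuous (deriv g) := hg.continuous_deriv le_rfl
  have hρ : Continuous (fun t => deriv g t ^ 2 + g t ^ 2) := by fun_prop
  set K := ∫ t in (x - 1 / 2)..(x + 1 / 2), (deriv g t ^ 2 + g t ^ 2) with hK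
  have hab : x - 1 / 2 ≤ x + 1 / 2 := by linarith
  have key : ∀ t ∈ Set.Icc (x - 1 / 2) (x + 1 / 2), g x ^ 2 - K ≤ g t ^ 2 := by
    intro t ht
    have hftc : ∫ s in t..x, 2 * g s * deriv g s = g x ^ 2 - g t ^ 2 := by
      apply integral_eq_sub_of_hasDerivAt (f := fun s => g s ^ 2)
      · intro s _
        have := ((hg.differentiable one_ne_zero) s).hasDerivAt.fun_pow 2
        simpa using this
      · exact Continuous.intervalIntegrable (by fun_prop) _ _
    have h1 : |∫ s in t..x, 2 * g s * deriv g s| ≤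
        |∫ s in t..x, (deriv g s ^ 2 + g s ^ 2)| := by
      have := norm_integral_le_abs_of_norm_le (μ := volume) (a := t) (b := x)
        (f := fun s => 2 * g s * deriv g s) (g := fun s => deriv g s ^ 2 + g s ^ 2)
        (by
          filter_upwards with s
          rw [Real.norm_eq_abs, abs_le]
          constructor <;> nlinarith [sq_nonneg (g s + deriv g s), sq_nonneg (g s - deriv g s)])
        (hρ.intervalIntegrable _ _)
      simpa using this
    have h2 : |∫ s in t..x, (deriv g s ^ 2 + g s ^ 2)| ≤ K := by
      have := abs_integral_mono_interval (μ := volume) (a := t) (b := x)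
        (c := x - 1 / 2) (d := x + 1 / 2) (f := fun s => deriv g s ^ 2 + g s ^ 2)
        (by
          rw [Set.uIoc_of_le hab]
          intro s hs
          rw [Set.mem_uIoc] at hs
          constructor <;> rcases hs with hs | hs <;> linarith [hs.1, hs.2, ht.1, ht.2])
        (by filter_upwards with s; positivity)
        (hρ.intervalIntegrable _ _)
      refine this.trans (le_of_eq (abs_of_nonneg ?_))
      exact intervalIntegral.integral_nonneg hab (fun s _ => by positivity)
    have h3 := le_abs_self (∫ s in t..x, 2 * g s * deriv g s)
    linarith
  have h4 : ∫ t in (x - 1 / 2)..(x + 1 / 2), (g x ^ 2 - K) ≤ K := by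
    refine integral_mono_on hab (continuous_const.intervalIntegrable _ _)
      (hρ.intervalIntegrable _ _) fun t ht => ?_
    linarith [key t ht, sq_nonneg (deriv g t)]
  rw [intervalIntegral.integral_const, smul_eq_mul] at h4
  linarith

/-- for a bounded sequence `(f_n, g_n)` with `∫ f_n² g_n → λ > 0`,
the concentration functions of `ρ_n = f_n′² + g_n′² + f_n² + g_n²` at width `1/2`
stay bounded away from `0`: there is `γ₀ > 0` below their liminf. -/
theorem no_vanishing_at_width_half (lam : ℝ) (hlam : 0 < lam)
    (f g : ℕ → ℝ → ℝ)
    (hf : ∀ n, ContDiff ℝ 1 (f n)) (hg : ∀ n, ContDiff ℝ 1 (g n))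
    (hf2 : ∀ n, Integrable (fun x => f n x ^ 2))
    (hf'2 : ∀ n, Integrable (fun x => deriv (f n) x ^ 2))
    (hg2 : ∀ n, Integrable (fun x => g n x ^ 2))
    (hg'2 : ∀ n, Integrable (fun x => deriv (g n) x ^ 2))
    (hbdd : ∃ B : ℝ, ∀ n,
      (∫ x : ℝ, f n x ^ 2) + (∫ x : ℝ, deriv (f n) x ^ 2) +
        (∫ x : ℝ, g n x ^ 2) + (∫ x : ℝ, deriv (g n) x ^ 2) ≤ B)
    (hconstr : Tendsto (fun n => ∫ x : ℝ, f n x ^ 2 * g n x) atTop (𝓝 lam)) :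
    ∃ γ₀ > (0 : ℝ),
      γ₀ ≤ liminf (fun n => ⨆ y : ℝ,
        ∫ x in (y - 1 / 2)..(y + 1 / 2),
          (deriv (f n) x ^ 2 + deriv (g n) x ^ 2 + f n x ^ 2 + g n x ^ 2)) atTop := by
  obtain ⟨B₀, hB₀⟩ := hbdd
  -- `B` is positive, so that it can be divided by.
  set B := max B₀ 1 with hBdef
  have hBpos : 0 < B := lt_of_lt_of_le one_pos (le_max_right _ _)
  have hB : ∀ n, (∫ x : ℝ, f n x ^ 2) + (∫ x : ℝ, deriv (f n) x ^ 2) +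
        (∫ x : ℝ, g n x ^ 2) + (∫ x : ℝ, deriv (g n) x ^ 2) ≤ B :=
    fun n => (hB₀ n).trans (le_max_left _ _)
  have hle : ∀ n (y : ℝ), ∫ x in (y - 1 / 2)..(y + 1 / 2),
      (deriv (f n) x ^ 2 + deriv (g n) x ^ 2 + f n x ^ 2 + g n x ^ 2) ≤ B := by
    intro n y
    rw [integral_of_le (by linarith)]
    have hint := (((hf'2 n).add (hg'2 n)).add (hf2 n)).add (hg2 n)
    have h1 : ∫ x in Set.Ioc (y - 1 / 2) (y + 1 / 2),
        (deriv (f n) x ^ 2 + deriv (g n) x ^ 2 + f n x ^ 2 + g n x ^ 2) ≤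
        ∫ x, (deriv (f n) x ^ 2 + deriv (g n) x ^ 2 + f n x ^ 2 + g n x ^ 2) :=
      setIntegral_le_integral hint (by filter_upwards with s; simp only [Pi.zero_apply]; positivity)
    have h2 : ∫ x, (deriv (f n) x ^ 2 + deriv (g n) x ^ 2 + f n x ^ 2 + g n x ^ 2) =
        (∫ x, deriv (f n) x ^ 2) + (∫ x, deriv (g n) x ^ 2) + (∫ x, f n x ^ 2) +
          ∫ x, g n x ^ 2 := by
      rw [integral_add ?_ (hg2 n), integral_add ?_ (hf2 n), integral_add (hf'2 n) (hg'2 n)]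
      · exact (hf'2 n).add (hg'2 n)
      · exact ((hf'2 n).add (hg'2 n)).add (hf2 n)
    linarith [hB n]
  refine ⟨(lam / (2 * B)) ^ 2 / 2, by positivity, ?_⟩
  apply le_liminf_of_le
  · exact (isBoundedUnder_of ⟨B, fun n => ciSup_le (hle n)⟩ :
      IsBoundedUnder (· ≤ ·) atTop _).isCoboundedUnder_flip
  filter_upwards [hconstr.eventually (lt_mem_nhds (half_lt_self hlam))] with n hn
  set γ := ⨆ y : ℝ, ∫ x in (y - 1 / 2)..(y + 1 / 2),
    (deriv (f n) x ^ 2 + deriv (g n) x ^ 2 + f n x ^ 2 + g n x ^ 2) with hγ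
  have hfd : Continuous (deriv (f n)) := (hf n).continuous_deriv le_rfl
  have hgd : Continuous (deriv (g n)) := (hg n).continuous_deriv le_rfl
  have hfc : Continuous (f n) := (hf n).continuous
  have hgc : Continuous (g n) := (hg n).continuous
  have hsq : ∀ x, g n x ^ 2 ≤ 2 * γ := by
    intro x
    have h1 := sq_le_two_mul_integral (g n) (hg n) x
    have h2 : ∫ t in (x - 1 / 2)..(x + 1 / 2), (deriv (g n) t ^ 2 + g n t ^ 2) ≤
        ∫ t in (x - 1 / 2)..(x + 1 / 2),
          (deriv (f n) t ^ 2 + deriv (g n) t ^ 2 + f n t ^ 2 + g n t ^ 2) := by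
      refine integral_mono_on (by linarith) (Continuous.intervalIntegrable (by fun_prop) _ _)
        (Continuous.intervalIntegrable (by fun_prop) _ _) fun t _ => ?_
      linarith [sq_nonneg (deriv (f n) t), sq_nonneg (f n t)]
    have h3 := le_ciSup (f := fun y : ℝ => ∫ x in (y - 1 / 2)..(y + 1 / 2),
      (deriv (f n) x ^ 2 + deriv (g n) x ^ 2 + f n x ^ 2 + g n x ^ 2))
      ⟨B, by rintro _ ⟨y, rfl⟩; exact hle n y⟩ x
    simp only [← hγ] at h3
    linarith
  have hγ0 : 0 ≤ 2 * γ := (sq_nonneg _).trans (hsq 0)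
  have hbound : ∫ x, f n x ^ 2 * g n x ≤ √(2 * γ) * B := by
    have h1 := norm_integral_le_of_norm_le (f := fun x => f n x ^ 2 * g n x)
      ((hf2 n).const_mul √(2 * γ)) (by
        filter_upwards with x
        rw [norm_mul, Real.norm_of_nonneg (sq_nonneg _), mul_comm, Real.norm_eq_abs]
        exact mul_le_mul_of_nonneg_right (Real.abs_le_sqrt (hsq x)) (sq_nonneg _))
    rw [MeasureTheory.integral_const_mul] at h1
    have h2 : ∫ x, f n x ^ 2 ≤ B := by
      have a1 : 0 ≤ ∫ x, deriv (f n) x ^ 2 := integral_nonneg fun x => sq_nonneg _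
      have a2 : 0 ≤ ∫ x, deriv (g n) x ^ 2 := integral_nonneg fun x => sq_nonneg _
      have a3 : 0 ≤ ∫ x, g n x ^ 2 := integral_nonneg fun x => sq_nonneg _
      linarith [hB n]
    exact (Real.le_norm_self _).trans
      (h1.trans (mul_le_mul_of_nonneg_left h2 (Real.sqrt_nonneg _)))
  have hs : lam / (2 * B) ≤ √(2 * γ) := by
    rw [div_le_iff₀ (by positivity)]
    linarith
  have := (Real.le_sqrt (by positivity) hγ0).1 hs
  linarith
end
end
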